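/- arXiv:1201.1139 — 3 statements merged into one kernel-verified Lean document; each statement's English description precedes it below -/
import Mathlib

section
/- Let p ≥ 3 be a prime, let k be an algebraic closure of 𝔽_p, and let ι : SL₂(𝔽_p) → SL₂(k) be the embedding induced by the inclusion 𝔽_p ↪ k. For γ ∈ k^×, let C_γ = {[[γ,t],[0,γ⁻¹]] : t ∈ k} ⊆ SL₂(k). Then for any γ ∈ k^×, any x ∈ SL₂(k), and any symmetric generating set H of SL₂(𝔽_p) containing the identity, |{h ∈ H : ι(h) ∈ x·C_γ·x⁻¹}|³ · |H|⁵ ≤ 8 · |H^(3)|⁶ (equivalently, |{h ∈ H : ι(h) ∈ x·C_γ·x⁻¹}| ≤ 2·α²·|H|^(1/3) where α = |H^(3)|/|H|). -/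
open Pointwise

instance {n : Type*} [DecidableEq n] [Fintype n] {R : Type*} [CommRing R] [DecidableEq R] :
    DecidableEq (Matrix.SpecialLinearGroup n R) := Subtype.instDecidableEq

open Matrix in
lemma aux_ext {K G : Type*} [Field K] [Group G]
    (φ : G →* SpecialLinearGroup (Fin 2) K) (hφ : Function.Injective φ) (γ : K)
    {u v : G} (hu0 : φ u 1 0 = 0) (hu1 : φ u 0 0 = γ) (hu2 : φ u 1 1 = γ⁻¹)
    (hv0 : φ v 1 0 = 0) (hv1 : φ v 0 0 = γ) (hv2 : φ v 1 1 = γ⁻¹)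
    (h : φ u 0 1 = φ v 0 1) : u = v := by
  apply hφ
  ext i j
  fin_cases i <;> fin_cases j <;> simp_all

lemma aux_mul {K : Type*} [Field K] (g h : Matrix.SpecialLinearGroup (Fin 2) K) (i j : Fin 2) :
    (g * h) i j = g i 0 * h 0 j + g i 1 * h 1 j := by
  rw [Matrix.SpecialLinearGroup.coe_mul, Matrix.mul_apply, Fin.sum_univ_two]

open Matrix in
lemma aux_count {K G : Type*} [Field K] [Group G] [DecidableEq G]
    (φ : G →* SpecialLinearGroup (Fin 2) K) (hφ : Function.Injective φ) (γ : K) (hγ : γ ≠ 0)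
    (H A : Finset G) (hAH : A ⊆ H)
    (hA : ∀ u ∈ A, φ u 1 0 = 0 ∧ φ u 0 0 = γ ∧ φ u 1 1 = γ⁻¹)
    (h : G) (hh : h ∈ H) (hc : φ h 1 0 ≠ 0) :
    A.card * (A.card - 1) * A.card ≤ (H ^ 5).card := by
  classical
  set A' := A.filter (fun u => φ (h * u * h) 1 0 ≠ 0) with hA'
  have key : ∀ u ∈ A, ∀ v ∈ A, φ (h * u * h) 1 0 = φ (h * v * h) 1 0 → u = v := by
    intro u hu v hv e
    obtain ⟨a1, a2, a3⟩ := hA u hu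
    obtain ⟨b1, b2, b3⟩ := hA v hv
    refine aux_ext φ hφ γ a1 a2 a3 b1 b2 b3 ?_
    simp only [map_mul, aux_mul, a1, a2, a3, b1, b2, b3] at e
    have : φ h 1 0 * φ h 1 0 * φ u 0 1 = φ h 1 0 * φ h 1 0 * φ v 0 1 := by linear_combination e
    exact mul_left_cancel₀ (mul_ne_zero hc hc) this
  have hcard : A.card - 1 ≤ A'.card := by
    have h1 : (A.filter (fun u => ¬ φ (h * u * h) 1 0 ≠ 0)).card ≤ 1 := by
      rw [Finset.card_le_one]
      intro u hu v hv
      simp only [Finset.mem_filter, not_not] at hu hv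
      exact key u hu.1 v hv.1 (hu.2.trans hv.2.symm)
    have h2 := Finset.card_filter_add_card_filter_not (s := A) (fun u => φ (h * u * h) 1 0 ≠ 0)
    rw [← hA'] at h2
    omega
  calc A.card * (A.card - 1) * A.card ≤ A.card * A'.card * A.card := by gcongr
    _ = ((A ×ˢ A') ×ˢ A).card := by simp [Finset.card_product]
    _ ≤ (H ^ 5).card := by
      apply Finset.card_le_card_of_injOn (fun q => q.1.1 * (h * q.1.2 * h) * q.2)
      · rintro ⟨⟨u, v⟩, w⟩ hq
        simp only [Finset.coe_product, Set.mem_prod, Finset.mem_coe] at hq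
        have hu := hAH hq.1.1
        have hv := hAH (Finset.filter_subset _ _ hq.1.2)
        have hw := hAH hq.2
        have : H ^ 5 = H * (H * H * H) * H := by simp only [pow_succ, pow_zero, one_mul, mul_assoc]
        simp only [this, Finset.mem_coe]
        exact Finset.mul_mem_mul (Finset.mul_mem_mul hu
          (Finset.mul_mem_mul (Finset.mul_mem_mul hh hv) hh)) hw
      · rintro ⟨⟨u, v⟩, w⟩ hq ⟨⟨u', v'⟩, w'⟩ hq' e
        simp only [Finset.coe_product, Set.mem_prod, Finset.mem_coe] at hq hq'
        obtain ⟨⟨hu, hv⟩, hw⟩ := hq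
        obtain ⟨⟨hu', hv'⟩, hw'⟩ := hq'
        simp only [hA', Finset.mem_filter] at hv hv'
        dsimp only at e
        obtain ⟨a1, a2, a3⟩ := hA u hu
        obtain ⟨b1, b2, b3⟩ := hA u' hu'
        obtain ⟨c1, c2, c3⟩ := hA w hw
        obtain ⟨d1, d2, d3⟩ := hA w' hw'
        have e1 : φ (u * (h * v * h) * w) 1 0 = φ (u' * (h * v' * h) * w') 1 0 := by rw [e]
        have e2 : φ (u * (h * v * h) * w) 1 1 = φ (u' * (h * v' * h) * w') 1 1 := by rw [e]
        rw [map_mul, map_mul, map_mul φ (u' * _), map_mul φ u'] at e1 e2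
        have hvv : v = v' := by
          refine key v hv.1 v' hv'.1 ?_
          simp only [aux_mul (φ u * _), aux_mul (φ u), aux_mul (φ u' * _), aux_mul (φ u'),
            a1, a2, a3, b1, b2, b3, c1, c2, c3, d1, d2, d3] at e1
          have e3 := congrArg (fun z => z) e1
          simp only [zero_mul, mul_zero, zero_add, add_zero] at e3
          rw [mul_right_comm, mul_right_comm _ _ γ, inv_mul_cancel₀ hγ, one_mul, one_mul] at e3
          exact e3
        subst hvv
        have hww : w = w' := by
          refine aux_ext φ hφ γ c1 c2 c3 d1 d2 d3 ?_
          simp only [aux_mul (φ u * _), aux_mul (φ u), aux_mul (φ u' * _), aux_mul (φ u'),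
            a1, a2, a3, b1, b2, b3, c1, c2, c3, d1, d2, d3] at e2
          have : (γ⁻¹ * φ (h * v * h) 1 0) * φ w 0 1 = (γ⁻¹ * φ (h * v * h) 1 0) * φ w' 0 1 := by
            linear_combination e2
          exact mul_left_cancel₀ (mul_ne_zero (inv_ne_zero hγ) hv.2) this
        subst hww
        have := mul_right_cancel (mul_right_cancel e)
        subst this
        rfl

lemma aux_inv {K : Type*} [Field K] (g : Matrix.SpecialLinearGroup (Fin 2) K) :
    (g⁻¹) 1 0 = - g 1 0 ∧ (g⁻¹) 1 1 = g 0 0 := by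
  have := Matrix.SpecialLinearGroup.coe_inv g
  rw [Matrix.adjugate_fin_two] at this
  constructor
  · have := congrFun (congrFun this 1) 0
    simpa using this
  · have := congrFun (congrFun this 1) 1
    simpa using this

lemma aux_map {F K : Type*} [Field F] [Field K] (f : F →+* K)
    (g : Matrix.SpecialLinearGroup (Fin 2) F) (i j : Fin 2) :
    Matrix.SpecialLinearGroup.map f g i j = f (g i j) := rfl

open Matrix in
lemma aux_exists {F K : Type*} [Field F] [Field K] (f : F →+* K)
    (x : SpecialLinearGroup (Fin 2) K) (H : Set (SpecialLinearGroup (Fin 2) F))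
    (hgen : Subgroup.closure H = ⊤) :
    ∃ h ∈ H, (x⁻¹ * SpecialLinearGroup.map f h * x) 1 0 ≠ 0 := by
  by_contra! hcon
  have hall : ∀ g : SpecialLinearGroup (Fin 2) F,
      (x⁻¹ * SpecialLinearGroup.map f g * x) 1 0 = 0 := by
    intro g
    have hg : g ∈ Subgroup.closure H := by rw [hgen]; trivial
    induction hg using Subgroup.closure_induction with
    | mem y hy => exact hcon y hy
    | one => simp
    | mul y z _ _ hy hz =>
      have : x⁻¹ * SpecialLinearGroup.map f (y * z) * x
          = (x⁻¹ * SpecialLinearGroup.map f y * x) * (x⁻¹ * SpecialLinearGroup.map f z * x) := by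
        rw [map_mul]; group
      rw [this, aux_mul, hy, hz]; ring
    | inv y _ hy =>
      have : x⁻¹ * SpecialLinearGroup.map f y⁻¹ * x
          = (x⁻¹ * SpecialLinearGroup.map f y * x)⁻¹ := by
        rw [map_inv]; group
      rw [this, (aux_inv _).1, hy, neg_zero]
  have hall2 : ∀ a b c d : F, a * d - b * c = 1 →
      (-x 1 0 * f a + x 0 0 * f c) * x 0 0 + (-x 1 0 * f b + x 0 0 * f d) * x 1 0 = 0 := by
    intro a b c d h
    have h1 := hall ⟨!![a, b; c, d], by simpa [Matrix.det_fin_two] using h⟩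
    rw [aux_mul, aux_mul, aux_mul, (aux_inv x).1, (aux_inv x).2] at h1
    exact h1
  have h1 := hall2 1 1 0 1 (by ring)
  have h2 := hall2 1 0 1 1 (by ring)
  have hd := x.det_coe
  rw [Matrix.det_fin_two] at hd
  simp only [map_one, map_zero] at h1 h2
  have k1 : x 1 0 * x 1 0 = 0 := by linear_combination -h1
  have k2 : x 0 0 * x 0 0 = 0 := by linear_combination h2
  have k1' := mul_self_eq_zero.1 k1
  have k2' := mul_self_eq_zero.1 k2
  rw [k1', k2'] at hd
  simp at hd

lemma aux_pow {G : Type*} [Group G] [DecidableEq G] (H : Finset G)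
    (hsym : ∀ h ∈ H, h⁻¹ ∈ H) (hone : (1 : G) ∈ H) :
    (H ^ 5).card * H.card ^ 2 ≤ (H ^ 3).card ^ 3 := by
  have hinv : H⁻¹ = H := by
    ext g
    rw [Finset.mem_inv']
    exact ⟨fun h => by simpa using hsym _ h, hsym g⟩
  have hpos : (0 : ℝ) < H.card := by exact_mod_cast Finset.card_pos.2 ⟨1, hone⟩
  have := Finset.small_pow_of_small_tripling (m := 5) (A := H) (K := ((H ^ 3).card : ℝ) / H.card)
    (by norm_num) (by field_simp; rfl) hinv
  norm_num at this
  have h2 : ((H ^ 5).card : ℝ) * H.card ^ 2 ≤ (H ^ 3).card ^ 3 := by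
    calc ((H ^ 5).card : ℝ) * H.card ^ 2
        ≤ ((((H ^ 3).card : ℝ) / H.card) ^ 3 * H.card) * H.card ^ 2 := by gcongr
      _ = _ := by field_simp
  exact_mod_cast h2

/-- **Non-concentration in unipotent cosets (Lemma `lm-subkey`).** Let `p ≥ 3` be prime,
`k` an algebraic closure of `𝔽_p`, `ι : SL₂(𝔽_p) → SL₂(k)` the natural embedding, and for
`γ ∈ k^×` let `C_γ = {[[γ,t],[0,γ⁻¹]] : t ∈ k}`. Then for any `γ ≠ 0`, any `x ∈ SL₂(k)`
and any symmetric generating set `H` of `SL₂(𝔽_p)` containing `1`,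
`|{h ∈ H : ι(h) ∈ x·C_γ·x⁻¹}|³ · |H|⁵ ≤ 8·|H^(3)|⁶`. -/
theorem stmt_16 (p : ℕ) [Fact p.Prime] (hp3 : 3 ≤ p)
    (γ : AlgebraicClosure (ZMod p)) (hγ : γ ≠ 0)
    (x : Matrix.SpecialLinearGroup (Fin 2) (AlgebraicClosure (ZMod p)))
    (H : Finset (Matrix.SpecialLinearGroup (Fin 2) (ZMod p)))
    (hsym : ∀ h ∈ H, h⁻¹ ∈ H)
    (hone : (1 : Matrix.SpecialLinearGroup (Fin 2) (ZMod p)) ∈ H)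
    (hgen : Subgroup.closure (H : Set (Matrix.SpecialLinearGroup (Fin 2) (ZMod p))) = ⊤) :
    {h : Matrix.SpecialLinearGroup (Fin 2) (ZMod p) | h ∈ H ∧ ∃ t : AlgebraicClosure (ZMod p),
        ((Matrix.SpecialLinearGroup.map
            (algebraMap (ZMod p) (AlgebraicClosure (ZMod p))) h :
              Matrix.SpecialLinearGroup (Fin 2) (AlgebraicClosure (ZMod p))) :
            Matrix (Fin 2) (Fin 2) (AlgebraicClosure (ZMod p))) =
          (x : Matrix (Fin 2) (Fin 2) (AlgebraicClosure (ZMod p))) * !![γ, t; 0, γ⁻¹] *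
            ((x⁻¹ : Matrix.SpecialLinearGroup (Fin 2) (AlgebraicClosure (ZMod p))) :
              Matrix (Fin 2) (Fin 2) (AlgebraicClosure (ZMod p)))}.ncard ^ 3 * H.card ^ 5 ≤
      8 * (H ^ 3 : Finset (Matrix.SpecialLinearGroup (Fin 2) (ZMod p))).card ^ 6 := by
  classical
  set S := {h : Matrix.SpecialLinearGroup (Fin 2) (ZMod p) | h ∈ H ∧
    ∃ t : AlgebraicClosure (ZMod p),
        ((Matrix.SpecialLinearGroup.map
            (algebraMap (ZMod p) (AlgebraicClosure (ZMod p))) h :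
              Matrix.SpecialLinearGroup (Fin 2) (AlgebraicClosure (ZMod p))) :
            Matrix (Fin 2) (Fin 2) (AlgebraicClosure (ZMod p))) =
          (x : Matrix (Fin 2) (Fin 2) (AlgebraicClosure (ZMod p))) * !![γ, t; 0, γ⁻¹] *
            ((x⁻¹ : Matrix.SpecialLinearGroup (Fin 2) (AlgebraicClosure (ZMod p))) :
              Matrix (Fin 2) (Fin 2) (AlgebraicClosure (ZMod p)))} with hS
  have hSH : S ⊆ (H : Set _) := fun h hh => hh.1
  have hfin : S.Finite := H.finite_toSet.subset hSH
  set A := hfin.toFinset with hAdef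
  have hcardA : S.ncard = A.card := Set.ncard_eq_toFinset_card S hfin
  let φ : Matrix.SpecialLinearGroup (Fin 2) (ZMod p) →*
      Matrix.SpecialLinearGroup (Fin 2) (AlgebraicClosure (ZMod p)) :=
    (MulAut.conj x⁻¹).toMonoidHom.comp
      (Matrix.SpecialLinearGroup.map (algebraMap (ZMod p) (AlgebraicClosure (ZMod p))))
  have hφe : ∀ g, φ g = x⁻¹ * Matrix.SpecialLinearGroup.map
      (algebraMap (ZMod p) (AlgebraicClosure (ZMod p))) g * x := by
    intro g
    simp [φ, MulAut.conj_apply]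
  have hφ : Function.Injective φ := by
    intro g g' e
    rw [hφe, hφe] at e
    have e' := mul_left_cancel (mul_right_cancel e)
    ext i j
    have := congrArg (fun m : Matrix.SpecialLinearGroup (Fin 2) (AlgebraicClosure (ZMod p)) =>
      m i j) e'
    simpa using this
  have hA : ∀ u ∈ A, φ u 1 0 = 0 ∧ φ u 0 0 = γ ∧ φ u 1 1 = γ⁻¹ := by
    intro u hu
    obtain ⟨-, t, ht⟩ := (Set.Finite.mem_toFinset hfin).1 hu
    have hxx : ((x⁻¹ : Matrix.SpecialLinearGroup (Fin 2) (AlgebraicClosure (ZMod p))) :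
              Matrix (Fin 2) (Fin 2) (AlgebraicClosure (ZMod p))) * x.1 = 1 := by
      have := congrArg Subtype.val (inv_mul_cancel x)
      simpa only [Matrix.SpecialLinearGroup.coe_mul, Matrix.SpecialLinearGroup.coe_one] using this
    have : (φ u : Matrix (Fin 2) (Fin 2) (AlgebraicClosure (ZMod p))) = !![γ, t; 0, γ⁻¹] := by
      rw [hφe, Matrix.SpecialLinearGroup.coe_mul, Matrix.SpecialLinearGroup.coe_mul, ht]
      rw [Matrix.mul_assoc, Matrix.mul_assoc _ _ x.1, hxx, Matrix.mul_one, ← Matrix.mul_assoc,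
        hxx, Matrix.one_mul]
    rw [this]
    simp
  have hAH : A ⊆ H := fun u hu => ((Set.Finite.mem_toFinset hfin).1 hu).1
  obtain ⟨h, hh, hc⟩ := aux_exists (algebraMap (ZMod p) (AlgebraicClosure (ZMod p))) x _ hgen
  have hcount := aux_count φ hφ γ hγ H A hAH hA h hh (by rw [hφe]; exact hc)
  have hpow := aux_pow H hsym hone
  have hHle : H.card ≤ (H ^ 3).card := by
    apply Finset.card_le_card
    exact Finset.subset_pow hone (by norm_num)
  have hpos : 1 ≤ (H ^ 5).card := Finset.card_pos.2 (Finset.Nonempty.pow ⟨1, hone⟩)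
  rw [hcardA]
  have ha : A.card ^ 3 ≤ 2 * (H ^ 5).card := by
    rcases Nat.lt_or_ge A.card 2 with h1 | h1
    · have : A.card ^ 3 ≤ 1 := by
        interval_cases A.card <;> norm_num
      omega
    · obtain ⟨m, hm⟩ := Nat.exists_eq_add_of_le h1
      rw [hm] at hcount ⊢
      have : 2 + m - 1 = m + 1 := by omega
      rw [this] at hcount
      have e : 2 * ((2 + m) * (m + 1) * (2 + m)) = (2 + m) ^ 3 + m * (2 + m) ^ 2 := by ring
      have := Nat.zero_le (m * (2 + m) ^ 2)
      omega
  calc A.card ^ 3 * H.card ^ 5 ≤ (2 * (H ^ 5).card) * H.card ^ 5 := by gcongr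
    _ = 2 * ((H ^ 5).card * H.card ^ 2) * H.card ^ 3 := by ring
    _ ≤ 2 * ((H ^ 3).card ^ 3) * (H ^ 3).card ^ 3 := by gcongr
    _ = 2 * (H ^ 3).card ^ 6 := by ring
    _ ≤ 8 * (H ^ 3).card ^ 6 := by gcongr; norm_num
end

section
/- Let S ⊂ SL₂(ℤ) be a finite symmetric set which freely generates a free subgroup of rank |S|/2, and let Δ = max_{s∈S} ‖s‖. Let p be a prime and let s₁, …, s_m ∈ S (m ≥ 1) be a reduced word, i.e. s_{i+1}·s_i ≠ 1 for 1 ≤ i < m. If s₁⋯s_m ≡ 1 (mod p), i.e. the product reduces to the identity in SL₂(𝔽_p), then Δ^⌈m/2⌉ ≥ p/2. In particular the Cayley graph of SL₂(𝔽_p) with respect to S mod p contains no cycle of length m unless Δ^⌈m/2⌉ ≥ p/2. -/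
open Pointwise

/-- The ℓ² operator norm of an integer matrix in `SL₂(ℤ)`, i.e. the norm of the induced
linear operator on Euclidean `ℝ²`. -/
noncomputable def sl2zOpNorm (g : Matrix.SpecialLinearGroup (Fin 2) ℤ) : ℝ :=
  ‖Matrix.toEuclideanCLM (𝕜 := ℝ)
    ((g : Matrix (Fin 2) (Fin 2) ℤ).map (Int.cast : ℤ → ℝ))‖

lemma sl2z_entry_le (g : Matrix.SpecialLinearGroup (Fin 2) ℤ) (i j : Fin 2) :
    |((g : Matrix (Fin 2) (Fin 2) ℤ) i j : ℝ)| ≤ sl2zOpNorm g := by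
  set T := Matrix.toEuclideanCLM (𝕜 := ℝ)
    ((g : Matrix (Fin 2) (Fin 2) ℤ).map (Int.cast : ℤ → ℝ)) with hT
  have h1 := T.le_opNorm (EuclideanSpace.single j (1 : ℝ))
  have h2 := PiLp.norm_apply_le (T (EuclideanSpace.single j (1 : ℝ))) i
  have h3 : (T (EuclideanSpace.single j (1 : ℝ))) i
      = ((g : Matrix (Fin 2) (Fin 2) ℤ) i j : ℝ) := by
    simp [hT, Matrix.ofLp_toEuclideanCLM]
  rw [h3, Real.norm_eq_abs] at h2
  simp only [EuclideanSpace.norm_single, norm_one, mul_one] at h1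
  exact h2.trans h1

lemma sl2zOpNorm_mul (g h : Matrix.SpecialLinearGroup (Fin 2) ℤ) :
    sl2zOpNorm (g * h) ≤ sl2zOpNorm g * sl2zOpNorm h := by
  unfold sl2zOpNorm
  have e : ((g * h : Matrix.SpecialLinearGroup (Fin 2) ℤ) : Matrix (Fin 2) (Fin 2) ℤ).map
      (Int.cast : ℤ → ℝ) = (g : Matrix (Fin 2) (Fin 2) ℤ).map (Int.cast : ℤ → ℝ)
        * (h : Matrix (Fin 2) (Fin 2) ℤ).map (Int.cast : ℤ → ℝ) := by
    rw [Matrix.SpecialLinearGroup.coe_mul]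
    exact Matrix.map_mul (f := Int.castRingHom ℝ)
  rw [e, map_mul]
  exact norm_mul_le _ _

lemma sl2zOpNorm_one : sl2zOpNorm 1 ≤ 1 := by
  unfold sl2zOpNorm
  have e : ((1 : Matrix.SpecialLinearGroup (Fin 2) ℤ) : Matrix (Fin 2) (Fin 2) ℤ).map
      (Int.cast : ℤ → ℝ) = 1 := by
    simp
  rw [e, map_one]
  exact ContinuousLinearMap.norm_id_le

lemma one_le_sl2zOpNorm (g : Matrix.SpecialLinearGroup (Fin 2) ℤ) : 1 ≤ sl2zOpNorm g := by
  by_contra hlt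
  have h0 : ∀ i j, (g : Matrix (Fin 2) (Fin 2) ℤ) i j = 0 := by
    intro i j
    have h := (sl2z_entry_le g i j).trans_lt (not_le.mp hlt)
    have : |(g : Matrix (Fin 2) (Fin 2) ℤ) i j| < 1 := by exact_mod_cast h
    exact Int.abs_lt_one_iff.mp this
  have hd := g.det_coe
  rw [Matrix.det_fin_two, h0, h0] at hd
  simp [h0] at hd

lemma sl2zOpNorm_prod_le (D : ℝ) (hD : 1 ≤ D)
    (l : List (Matrix.SpecialLinearGroup (Fin 2) ℤ)) (hl : ∀ x ∈ l, sl2zOpNorm x ≤ D) :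
    sl2zOpNorm l.prod ≤ D ^ l.length := by
  induction l with
  | nil => simpa using sl2zOpNorm_one
  | cons a t ih =>
    rw [List.prod_cons, List.length_cons, pow_succ']
    refine (sl2zOpNorm_mul _ _).trans ?_
    have h1 := hl a (by simp)
    have h2 := ih (fun x hx => hl x (by simp [hx]))
    exact mul_le_mul h1 h2 (zero_le_one.trans (one_le_sl2zOpNorm _)) (by linarith)

/-- **Large girth of the Cayley graphs mod `p` (Proposition `pr-girth`).** Let `S ⊆ SL₂(ℤ)`
be a finite symmetric set freely generating a free group of rank `|S|/2` (i.e. no nonempty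
reduced word in `S` equals `1`), and `Δ = max_{s ∈ S} ‖s‖`. If a reduced word `s₁⋯s_m`
(`m ≥ 1`) in `S` reduces to the identity in `SL₂(𝔽_p)`, then `Δ^⌈m/2⌉ ≥ p/2`; in particular
the Cayley graph of `SL₂(𝔽_p)` with respect to `S mod p` has no cycle of length `m` unless
`Δ^⌈m/2⌉ ≥ p/2`. -/
theorem stmt_17 (S : Finset (Matrix.SpecialLinearGroup (Fin 2) ℤ))
    (hsym : ∀ s ∈ S, s⁻¹ ∈ S)
    (hfree : ∀ l : List (Matrix.SpecialLinearGroup (Fin 2) ℤ),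
      l ≠ [] → (∀ x ∈ l, x ∈ S) →
      l.Chain' (fun a b => a * b ≠ 1) → l.prod ≠ 1)
    (p : ℕ) (hp : p.Prime)
    (l : List (Matrix.SpecialLinearGroup (Fin 2) ℤ))
    (hne : l ≠ []) (hmem : ∀ x ∈ l, x ∈ S)
    (hred : l.Chain' (fun a b => a * b ≠ 1))
    (hcong : Matrix.SpecialLinearGroup.map (Int.castRingHom (ZMod p)) l.prod = 1) :
    (p : ℝ) / 2 ≤
      (S.sup' ⟨l.head hne, hmem _ (l.head_mem hne)⟩ sl2zOpNorm) ^ ((l.length + 1) / 2) := by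
  have hS : S.Nonempty := ⟨l.head hne, hmem _ (l.head_mem hne)⟩
  set D := S.sup' ⟨l.head hne, hmem _ (l.head_mem hne)⟩ sl2zOpNorm with hDdef
  have hle : ∀ x ∈ S, sl2zOpNorm x ≤ D := fun x hx => Finset.le_sup' sl2zOpNorm hx
  have hD : 1 ≤ D :=
    (one_le_sl2zOpNorm _).trans (hle _ (hmem _ (l.head_mem hne)))
  set k := (l.length + 1) / 2 with hk
  have hprod : (l.take k).prod * (l.drop k).prod = l.prod := List.prod_take_mul_prod_drop l k
  set A := (l.take k).prod with hA
  set B := ((l.drop k).prod)⁻¹ with hB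
  have hAn : sl2zOpNorm A ≤ D ^ k := by
    refine (sl2zOpNorm_prod_le D hD _
      (fun x hx => hle x (hmem x (List.mem_of_mem_take hx)))).trans ?_
    exact pow_le_pow_right₀ hD (by simp)
  have hBn : sl2zOpNorm B ≤ D ^ k := by
    rw [hB, List.prod_inv_reverse]
    refine (sl2zOpNorm_prod_le D hD _ ?_).trans ?_
    · intro x hx
      simp only [List.mem_reverse, List.mem_map] at hx
      obtain ⟨y, hy, rfl⟩ := hx
      exact hle _ (hsym _ (hmem y (List.mem_of_mem_drop hy)))
    · refine pow_le_pow_right₀ hD ?_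
      simp only [List.length_reverse, List.length_map, List.length_drop]
      omega
  have hAB : A ≠ B := by
    intro h
    apply hfree l hne hmem hred
    rw [← hprod, h, hB, inv_mul_cancel]
  have hmod : Matrix.SpecialLinearGroup.map (Int.castRingHom (ZMod p)) A
      = Matrix.SpecialLinearGroup.map (Int.castRingHom (ZMod p)) B := by
    rw [← hprod, map_mul] at hcong
    rw [hB, map_inv]
    exact eq_inv_of_mul_eq_one_left hcong
  have hex : ∃ i j, (A : Matrix (Fin 2) (Fin 2) ℤ) i j ≠ (B : Matrix (Fin 2) (Fin 2) ℤ) i j := by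
    by_contra! hcon
    exact hAB (Matrix.SpecialLinearGroup.ext _ _ hcon)
  obtain ⟨i, j, hij⟩ := hex
  have hent : (((A : Matrix (Fin 2) (Fin 2) ℤ) i j : ℤ) : ZMod p)
      = (((B : Matrix (Fin 2) (Fin 2) ℤ) i j : ℤ) : ZMod p) := by
    have := congrArg (fun g : Matrix.SpecialLinearGroup (Fin 2) (ZMod p) =>
      (g : Matrix (Fin 2) (Fin 2) (ZMod p)) i j) hmod
    simpa using this
  have hdvd : (p : ℤ) ∣ (A : Matrix (Fin 2) (Fin 2) ℤ) i j - (B : Matrix (Fin 2) (Fin 2) ℤ) i j := by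
    apply (ZMod.intCast_eq_intCast_iff_dvd_sub _ _ p).mp
    exact hent.symm
  have hpe := Int.le_of_dvd (abs_pos.mpr (sub_ne_zero.mpr hij)) ((dvd_abs _ _).mpr hdvd)
  have hpe' : (p : ℝ) ≤ |((A : Matrix (Fin 2) (Fin 2) ℤ) i j : ℝ)
      - ((B : Matrix (Fin 2) (Fin 2) ℤ) i j : ℝ)| := by exact_mod_cast hpe
  have h1 := (sl2z_entry_le A i j).trans hAn
  have h2 := (sl2z_entry_le B i j).trans hBn
  have h3 := abs_sub ((A : Matrix (Fin 2) (Fin 2) ℤ) i j : ℝ)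
    ((B : Matrix (Fin 2) (Fin 2) ℤ) i j : ℝ)
  linarith
end

section
/- Let G be a finite group, let α ≥ 1 be a real number, and let A ⊆ G be a symmetric subset with 1 ∈ A and |A^(3)| ≤ α·|A|. Then H = A^(3) is a (2α⁵)-approximate subgroup of G containing A: H is symmetric, contains the identity, A ⊆ H, and there exists a symmetric set X ⊆ H·H with |X| ≤ 2α⁵ and H·H ⊆ X·H. -/
open Pointwise

/-- **Sets with small tripling give approximate subgroups (Tao; Theorem `th-app-tripling`).**
If `A` is a symmetric subset of a finite group `G` with `1 ∈ A` and `|A^(3)| ≤ α·|A|`,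
then `H = A^(3)` is a `(2α⁵)`-approximate subgroup containing `A`: `H` is symmetric,
contains `1`, contains `A`, and there is a symmetric set `X ⊆ H·H` with `|X| ≤ 2α⁵`
and `H·H ⊆ X·H`. -/
theorem stmt_19 {G : Type*} [Group G] [Fintype G] [DecidableEq G]
    (α : ℝ) (hα : 1 ≤ α)
    (A : Finset G) (hsym : ∀ a ∈ A, a⁻¹ ∈ A) (hone : (1 : G) ∈ A)
    (htrip : ((A ^ 3 : Finset G).card : ℝ) ≤ α * A.card) :
    (1 : G) ∈ (A ^ 3 : Finset G) ∧
    (∀ h ∈ (A ^ 3 : Finset G), h⁻¹ ∈ (A ^ 3 : Finset G)) ∧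
    A ⊆ (A ^ 3 : Finset G) ∧
    ∃ X : Finset G, (∀ v ∈ X, v⁻¹ ∈ X) ∧
      X ⊆ (A ^ 3 : Finset G) * (A ^ 3 : Finset G) ∧
      (X.card : ℝ) ≤ 2 * α ^ 5 ∧
      (A ^ 3 : Finset G) * (A ^ 3 : Finset G) ⊆ X * (A ^ 3 : Finset G) := by
  have hinv : A⁻¹ = A := by
    ext x
    rw [Finset.mem_inv']
    exact ⟨fun h => by simpa using hsym _ h, fun h => hsym _ h⟩
  have hpow : ∀ n : ℕ, (A ^ n)⁻¹ = A ^ n := fun n => by rw [← inv_pow, hinv]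
  have hmono : ∀ {m n : ℕ}, m ≤ n → A ^ m ⊆ A ^ n := fun h =>
    Finset.pow_subset_pow_right hone h
  have h7 := Finset.small_pow_of_small_tripling (m := 7) (by norm_num) htrip hinv
  have h6 : A ^ 3 * A ^ 3 = A ^ 6 := by rw [← pow_add]
  obtain ⟨F, hFA, hF, hcov⟩ := Finset.ruzsa_covering_mul (A := A ^ 6) (B := A) (K := α ^ 5)
    ⟨1, hone⟩ (by rw [← pow_succ]; exact h7)
  have hA3 : A ⊆ A ^ 3 := by simpa using hmono (m := 1) (n := 3) (by norm_num)
  refine ⟨hA3 hone, fun h hh => ?_, hA3, F ∪ F⁻¹, fun v hv => ?_, ?_, ?_, ?_⟩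
  · rw [← hpow 3]
    exact Finset.inv_mem_inv hh
  · rw [Finset.mem_union, Finset.mem_inv'] at hv ⊢
    rw [inv_inv]
    exact hv.symm
  · rw [h6]
    refine Finset.union_subset hFA ?_
    rw [← hpow 6]
    exact Finset.inv_subset_inv hFA
  · have h1 : ((F ∪ F⁻¹).card : ℝ) ≤ F.card + F.card := by
      have := Finset.card_union_le F F⁻¹
      rw [Finset.card_inv] at this
      exact_mod_cast this
    linarith
  · rw [h6]
    refine hcov.trans (Finset.mul_subset_mul Finset.subset_union_left ?_)
    rw [div_eq_mul_inv, hinv, ← pow_two]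
    exact hmono (by norm_num)
end
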